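/- arXiv:1802.00084 — 2 statements merged into one kernel-verified Lean document; each statement's English description precedes it below -/
import Mathlib

section
/- Let T be a three-element set. The number of orbits, under the natural action of the symmetric group of T on families of subsets of T, of nonempty families F of subsets of T in which all members have the same cardinality parity, is exactly 14. -/
/-- The finite set of images of a family of subsets of `T` under the permutations of `T`. -/
def familyOrbit {T : Type} [Fintype T] [DecidableEq T] (F : Finset (Finset T)) :
    Finset (Finset (Finset T)) :=
  Finset.univ.image fun σ : Equiv.Perm T => F.image fun X => X.image σ

/-- The nonempty families of subsets of `T` whose members all have the same cardinality parity. -/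
def parityFamilies (T : Type) [Fintype T] [DecidableEq T] : Finset (Finset (Finset T)) :=
  Finset.univ.filter fun F => F.Nonempty ∧ ∀ X ∈ F, ∀ Y ∈ F, X.card % 2 = Y.card % 2

theorem ncard_orbits_eq_card_image {T : Type} [Fintype T] [DecidableEq T] :
    Set.ncard {O : Set (Finset (Finset T)) |
      ∃ F : Finset (Finset T),
        (F.Nonempty ∧ ∀ X ∈ F, ∀ Y ∈ F, X.card % 2 = Y.card % 2) ∧
        O = {F' | ∃ σ : Equiv.Perm T, F.image (fun X => X.image σ) = F'}} =
      ((parityFamilies T).image familyOrbit).card := by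
  rw [← Set.ncard_coe_finset, ← Set.ncard_image_of_injective _ Finset.coe_injective]
  congr 1
  ext O
  simp [parityFamilies, familyOrbit, Set.range, eq_comm]

theorem image_parityFamilies {T U : Type} [Fintype T] [DecidableEq T] [Fintype U] [DecidableEq U]
    (e : T ≃ U) :
    (parityFamilies T).image (Finset.image (Finset.image e)) = parityFamilies U := by
  ext G
  simp only [parityFamilies, Finset.mem_image, Finset.mem_filter, Finset.mem_univ, true_and]
  constructor
  · rintro ⟨F, ⟨hF, h⟩, rfl⟩
    refine ⟨hF.image _, ?_⟩
    simpa [Finset.card_image_of_injective _ e.injective] using h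
  · rintro ⟨hG, h⟩
    refine ⟨G.image (Finset.image e.symm), ⟨hG.image _, ?_⟩, ?_⟩
    · simpa [Finset.card_image_of_injective _ e.symm.injective] using h
    · simp [Finset.image_image, Function.comp_def]

theorem familyOrbit_image {T U : Type} [Fintype T] [DecidableEq T] [Fintype U] [DecidableEq U]
    (e : T ≃ U) (F : Finset (Finset T)) :
    familyOrbit (F.image (Finset.image e)) =
      (familyOrbit F).image (Finset.image (Finset.image e)) := by
  ext G
  simp only [familyOrbit, Finset.mem_image, Finset.mem_univ, true_and, Finset.image_image,
    Function.comp_def]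
  rw [← e.permCongr.exists_congr_right]
  simp [Equiv.permCongr_apply]

theorem card_image_familyOrbit_congr {T U : Type} [Fintype T] [DecidableEq T] [Fintype U]
    [DecidableEq U] (e : T ≃ U) :
    ((parityFamilies T).image familyOrbit).card = ((parityFamilies U).image familyOrbit).card := by
  rw [← image_parityFamilies e, Finset.image_image]
  simp only [Function.comp_def, familyOrbit_image]
  rw [← Function.comp_def (Finset.image (Finset.image (Finset.image e))) familyOrbit,
    ← Finset.image_image]
  exact (Finset.card_image_of_injective _ (Finset.image_injective
    (Finset.image_injective (Finset.image_injective e.injective)))).symm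

theorem card_image_familyOrbit_fin_three :
    ((parityFamilies (Fin 3)).image familyOrbit).card = 14 := by
  decide +kernel


/-- On a three-element set `T`, the number of orbits — under the natural action of the
symmetric group of `T` on families of subsets of `T` — of nonempty families all of whose
members have the same cardinality parity, is exactly 14. -/
theorem orbits_of_parity_families_card {T : Type} [Fintype T] [DecidableEq T]
    (hT : Fintype.card T = 3) :
    Set.ncard {O : Set (Finset (Finset T)) |
      ∃ F : Finset (Finset T),
        (F.Nonempty ∧ ∀ X ∈ F, ∀ Y ∈ F, X.card % 2 = Y.card % 2) ∧
        O = {F' | ∃ σ : Equiv.Perm T, F.image (fun X => X.image σ) = F'}} = 14 := by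
  rw [ncard_orbits_eq_card_image, card_image_familyOrbit_congr (Fintype.equivFinOfCardEq hT),
    card_image_familyOrbit_fin_three]
end

section
/- There is a natural number N with the following property: for every finite simple graph G with integer edge weights w, and every terminal set T ⊆ V(G) with |T| ≤ 3, there exist a finite simple graph G' containing T with at most N vertices, integer edge weights w' on G', and a constant c ∈ ℤ, such that for every X ⊆ T, the minimum total weight of a matching of G covering exactly (V(G) ∖ T) ∪ X equals c plus the minimum total weight of a matching of G' covering exactly (V(G') ∖ T) ∪ X, where both minima are taken in ℤ ∪ {+∞} (with value +∞ when no such matching exists, and c + ∞ = ∞). -/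
/-- A finite simple graph: a finite vertex set together with a symmetric,
irreflexive adjacency relation whose endpoints lie in the vertex set. -/
structure FinGraph (V : Type) where
  verts : Set V
  finite : verts.Finite
  Adj : V → V → Prop
  symm : ∀ u v, Adj u v → Adj v u
  irrefl : ∀ v, ¬ Adj v v
  mem_of_adj : ∀ u v, Adj u v → u ∈ verts ∧ v ∈ verts

/-- The set of vertices covered by a set of (unordered) edges. -/
def coversVerts {V : Type} (M : Set (Sym2 V)) : Set V := {v | ∃ e ∈ M, v ∈ e}

/-- `M` is a matching of `G`: a set of edges of `G`, no two of which share an endpoint. -/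
def FinGraph.IsMatching {V : Type} (G : FinGraph V) (M : Set (Sym2 V)) : Prop :=
  (∀ e ∈ M, ∃ u v, G.Adj u v ∧ e = s(u, v)) ∧
  ∀ e ∈ M, ∀ f ∈ M, e ≠ f → ∀ v, v ∈ e → v ∉ f

/-- The matching pattern of `G` on a terminal set `T`: the family of subsets `X ⊆ T`
such that some matching of `G` covers exactly `(V(G) \ T) ∪ X`. -/
def FinGraph.matchingPattern {V : Type} (G : FinGraph V) (T : Set V) : Set (Set V) :=
  {X | X ⊆ T ∧ ∃ M, G.IsMatching M ∧ coversVerts M = (G.verts \ T) ∪ X}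

/-- The minimum total weight, in `ℤ ∪ {+∞}`, of a matching of `G` covering exactly
`(V(G) \ T) ∪ X`; the value is `+∞` when no such matching exists. -/
noncomputable def minMatchingWeight {V : Type} (G : FinGraph V) (w : Sym2 V → ℤ)
    (T X : Set V) : WithTop ℤ :=
  sInf {z : WithTop ℤ | ∃ M : Set (Sym2 V),
    G.IsMatching M ∧ coversVerts M = (G.verts \ T) ∪ X ∧
    z = ((∑ᶠ e ∈ M, w e : ℤ) : WithTop ℤ)}

theorem minMatchingWeight_eq_top {V : Type} {G : FinGraph V} {w : Sym2 V → ℤ} {T X : Set V}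
    (h : ∀ M, G.IsMatching M → coversVerts M ≠ (G.verts \ T) ∪ X) :
    minMatchingWeight G w T X = ⊤ := by
  have : {z : WithTop ℤ | ∃ M : Set (Sym2 V),
    G.IsMatching M ∧ coversVerts M = (G.verts \ T) ∪ X ∧
    z = ((∑ᶠ e ∈ M, w e : ℤ) : WithTop ℤ)} = ∅ := by
    ext z
    simp only [Set.mem_ofPred_eq, Set.mem_empty_iff_false, iff_false]
    rintro ⟨M, hM, hc, -⟩
    exact h M hM hc
  rw [minMatchingWeight, this, WithTop.sInf_empty]

theorem minMatchingWeight_eq_coe {V : Type} {G : FinGraph V} {w : Sym2 V → ℤ} {T X : Set V}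
    {a : ℤ} (hex : ∃ M, G.IsMatching M ∧ coversVerts M = (G.verts \ T) ∪ X)
    (h : ∀ M, G.IsMatching M → coversVerts M = (G.verts \ T) ∪ X → ∑ᶠ e ∈ M, w e = a) :
    minMatchingWeight G w T X = a := by
  have : {z : WithTop ℤ | ∃ M : Set (Sym2 V),
    G.IsMatching M ∧ coversVerts M = (G.verts \ T) ∪ X ∧
    z = ((∑ᶠ e ∈ M, w e : ℤ) : WithTop ℤ)} = {(a : WithTop ℤ)} := by
    ext z
    simp only [Set.mem_ofPred_eq, Set.mem_singleton_iff]
    constructor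
    · rintro ⟨M, hM, hc, rfl⟩
      rw [h M hM hc]
    · rintro rfl
      obtain ⟨M, hM, hc⟩ := hex
      exact ⟨M, hM, hc, by rw [h M hM hc]⟩
  rw [minMatchingWeight, this, csInf_singleton]

/-- The set of vertices covered by a matching has even cardinality. -/
theorem FinGraph.IsMatching.even_ncard_coversVerts {V : Type} {G : FinGraph V}
    {M : Set (Sym2 V)} (hM : G.IsMatching M) : Even (coversVerts M).ncard := by
  classical
  have hfin : M.Finite := by
    refine ((G.finite.prod G.finite).image fun p => s(p.1, p.2)).subset ?_
    intro e he
    obtain ⟨u, v, huv, rfl⟩ := hM.1 e he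
    exact ⟨(u, v), G.mem_of_adj u v huv, rfl⟩
  have hcov : coversVerts M = (hfin.toFinset.biUnion Sym2.toFinset : Finset V) := by
    ext v
    simp [coversVerts]
  rw [hcov, Set.ncard_coe_finset, Finset.card_biUnion]
  · refine Finset.even_sum _ fun e he => ?_
    obtain ⟨u, v, huv, rfl⟩ := hM.1 e (hfin.mem_toFinset.1 he)
    rw [Sym2.card_toFinset_of_not_isDiag]
    · exact even_two
    · rw [Sym2.mk_isDiag_iff]
      rintro rfl
      exact G.irrefl _ huv
  · intro e he e' he' hne
    refine Finset.disjoint_left.2 ?_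
    intro v hv hv'
    rw [Sym2.mem_toFinset] at hv hv'
    exact hM.2 e (hfin.mem_toFinset.1 he) e' (hfin.mem_toFinset.1 he') hne v hv hv'

/-- Two terminal sets that can both be covered differ in an even number of terminals. -/
theorem even_ncard_symmDiff_of_minMatchingWeight_ne_top {V : Type} {G : FinGraph V}
    {w : Sym2 V → ℤ} {T X Y : Set V} (hT : T ⊆ G.verts) (hX : X ⊆ T) (hY : Y ⊆ T)
    (hfX : minMatchingWeight G w T X ≠ ⊤) (hfY : minMatchingWeight G w T Y ≠ ⊤) :
    Even (symmDiff X Y).ncard := by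
  have key : ∀ Z ⊆ T, minMatchingWeight G w T Z ≠ ⊤ →
      Even ((G.verts \ T).ncard + Z.ncard) := by
    intro Z hZ hfZ
    by_contra hodd
    refine hfZ (minMatchingWeight_eq_top fun M hM hc => hodd ?_)
    rw [← Set.ncard_union_eq (Set.disjoint_sdiff_left.mono_right hZ)
      (G.finite.subset Set.sdiff_subset) (G.finite.subset (hZ.trans hT)), ← hc]
    exact hM.even_ncard_coversVerts
  have hXf : X.Finite := G.finite.subset (hX.trans hT)
  have hYf : Y.Finite := G.finite.subset (hY.trans hT)
  have h1 := key X hX hfX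
  have h2 := key Y hY hfY
  have h3 : (symmDiff X Y).ncard = (X \ Y).ncard + (Y \ X).ncard := by
    rw [Set.symmDiff_def, Set.ncard_union_eq disjoint_sdiff_sdiff hXf.sdiff hYf.sdiff]
  have h4 := Set.ncard_inter_add_ncard_sdiff_eq_ncard X Y hXf
  have h5 := Set.ncard_inter_add_ncard_sdiff_eq_ncard Y X hYf
  rw [Set.inter_comm] at h5
  grind

/-- The network on the terminals `T` in which every `t ∈ B` carries a pendant edge to a new
vertex `r t`, while two vertices `r s` and `r t` are joined whenever `F {s, t}` holds. -/
def pendantNetwork {V : Type} (T B : Set V) (hT : T.Finite) (hB : B ⊆ T) (r : V → V)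
    (hrB : ∀ t ∈ B, r t ∉ T) (hr : ∀ t ∉ B, r t = t) (hinj : Set.InjOn r T)
    (F : Set V → Prop) : FinGraph V where
  verts := T ∪ r '' B
  finite := hT.union ((hT.subset hB).image r)
  Adj u v := (∃ t ∈ B, s(u, v) = s(t, r t)) ∨
    ∃ s ∈ T, ∃ t ∈ T, s ≠ t ∧ F {s, t} ∧ s(u, v) = s(r s, r t)
  symm u v h := by rwa [Sym2.eq_swap]
  irrefl v h := by
    rcases h with ⟨t, ht, h⟩ | ⟨s, hs, t, ht, hst, -, h⟩
    · have : t = r t := by grind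
      exact hrB t ht (this ▸ hB ht)
    · exact hst (hinj hs ht (by grind))
  mem_of_adj u v h := by
    have key : ∀ t ∈ T, r t ∈ T ∪ r '' B := by
      intro t ht
      by_cases htB : t ∈ B
      · exact Or.inr ⟨t, htB, rfl⟩
      · exact Or.inl ((hr t htB).symm ▸ ht)
    rcases h with ⟨t, ht, h⟩ | ⟨s, hs, t, ht, -, -, h⟩
    · have h1 := key t (hB ht)
      have h2 := Set.mem_union_left (r '' B) (hB ht)
      grind
    · have h1 := key t ht
      have h2 := key s hs
      grind

section PendantNetwork

variable {V : Type} {T B : Set V} {hT : T.Finite} {hB : B ⊆ T} {r : V → V}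
  {hrB : ∀ t ∈ B, r t ∉ T} {hr : ∀ t ∉ B, r t = t} {hinj : Set.InjOn r T} {F : Set V → Prop}

theorem pendantNetwork_verts_diff :
    (pendantNetwork T B hT hB r hrB hr hinj F).verts \ T = r '' B := by
  ext v
  simp only [pendantNetwork, Set.mem_sdiff, Set.mem_union, Set.mem_image]
  grind

theorem pendantNetwork_ncard_verts_le :
    (pendantNetwork T B hT hB r hrB hr hinj F).verts.ncard ≤ 2 * T.ncard := by
  have h1 := Set.ncard_union_le T (r '' B)
  have h2 := Set.ncard_image_le (f := r) (hT.subset hB)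
  have h3 := Set.ncard_le_ncard hB hT
  change (T ∪ r '' B).ncard ≤ _
  omega

/-- Whether `t` is in exactly one of `B` and `X` is detected by whether `r t` is matched along
an edge that is not pendant. -/
theorem mem_symmDiff_iff_of_isMatching {M : Set (Sym2 V)} {X : Set V}
    (hM : (pendantNetwork T B hT hB r hrB hr hinj F).IsMatching M)
    (hc : coversVerts M = r '' B ∪ X) (hX : X ⊆ T) {x : V} (hx : x ∈ T) :
    x ∈ symmDiff B X ↔ ∃ s ∈ T, ∃ t ∈ T, s ≠ t ∧ s(r s, r t) ∈ M ∧ (x = s ∨ x = t) := by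
  have hcov : ∀ v, (∃ e ∈ M, v ∈ e) ↔ v ∈ r '' B ∪ X := fun v => by rw [← hc]; rfl
  have hedge : ∀ e ∈ M, (∃ t ∈ B, e = s(t, r t)) ∨
      ∃ s ∈ T, ∃ t ∈ T, s ≠ t ∧ e = s(r s, r t) := by
    intro e he
    obtain ⟨u, v, huv, rfl⟩ := hM.1 e he
    rcases huv with h | ⟨s, hs, t, ht, hst, -, h⟩
    exacts [Or.inl h, Or.inr ⟨s, hs, t, ht, hst, h⟩]
  have hpend : x ∈ B → (x ∈ X ↔ s(x, r x) ∈ M) := by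
    intro hxB
    constructor
    · intro hxX
      obtain ⟨e, he, hxe⟩ := (hcov x).2 (Or.inr hxX)
      rcases hedge e he with ⟨t, ht, rfl⟩ | ⟨s, hs, t, ht, hst, rfl⟩
      · grind
      · grind
    · intro h
      have := (hcov x).1 ⟨_, h, by simp⟩
      grind
  have hdisj : ∀ e ∈ M, ∀ f ∈ M, ∀ v, v ∈ e → v ∈ f → e = f := by
    intro e he f hf v hve hvf
    by_contra hne
    exact hM.2 e he f hf hne v hve hvf
  rw [Set.mem_symmDiff]
  constructor
  · intro h
    have hrx : r x ∈ r '' B ∪ X := by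
      rcases h with h | h
      · exact Or.inl ⟨x, h.1, rfl⟩
      · exact Or.inr ((hr x h.2).symm ▸ h.1)
    obtain ⟨e, he, hxe⟩ := (hcov _).2 hrx
    rcases hedge e he with ⟨t, ht, rfl⟩ | ⟨s, hs, t, ht, hst, rfl⟩
    · exfalso
      have := hB ht
      have : t = x := by
        rcases Sym2.mem_iff.1 hxe with h' | h'
        · grind
        · exact (hinj hx (hB ht) h').symm
      grind
    · refine ⟨s, hs, t, ht, hst, he, ?_⟩
      rcases Sym2.mem_iff.1 hxe with h' | h'
      · exact Or.inl (hinj hx hs h')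
      · exact Or.inr (hinj hx ht h')
  · rintro ⟨s, hs, t, ht, hst, he, hxst⟩
    have hmem : r x ∈ s(r s, r t) := by
      rcases hxst with rfl | rfl <;> simp
    by_cases hxB : x ∈ B
    · refine Or.inl ⟨hxB, fun hxX => ?_⟩
      have h1 := hdisj _ ((hpend hxB).1 hxX) _ he (r x) (by simp) hmem
      have hxT := hB hxB
      have h2 : x ∈ s(r s, r t) := h1 ▸ Sym2.mem_mk_left _ _
      grind
    · have := (hcov _).1 ⟨_, he, hmem⟩
      rw [hr x hxB] at this
      grind

theorem eq_symmDiff_pair_of_isMatching {M : Set (Sym2 V)} {X : Set V} (hcard : T.ncard ≤ 3)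
    (hM : (pendantNetwork T B hT hB r hrB hr hinj F).IsMatching M)
    (hc : coversVerts M = r '' B ∪ X) (hX : X ⊆ T) {s t : V} (hs : s ∈ T) (ht : t ∈ T)
    (hst : s ≠ t) (he : s(r s, r t) ∈ M) :
    symmDiff B X = {s, t} ∧ ∀ e ∈ M, e ≠ s(r s, r t) → ∃ b ∈ B, e = s(b, r b) := by
  classical
  have huniq : ∀ s' ∈ T, ∀ t' ∈ T, s' ≠ t' → s(r s', r t') ∈ M →
      s(r s', r t') = s(r s, r t) := by
    intro s' hs' t' ht' hst' he'
    by_contra hne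
    have hd := hM.2 _ he' _ he hne
    have h1 := hd (r s') (by simp)
    have h2 := hd (r t') (by simp)
    have hsub : (({s, t, s', t'} : Finset V) : Set V) ⊆ T := by
      intro v
      simp only [Finset.coe_insert, Finset.coe_singleton, Set.mem_insert_iff,
        Set.mem_singleton_iff]
      grind
    have h4 : ({s, t, s', t'} : Finset V).card = 4 := by
      have h3 : s' ≠ s ∧ s' ≠ t ∧ t' ≠ s ∧ t' ≠ t := by grind
      rw [Finset.card_insert_of_notMem (by grind), Finset.card_insert_of_notMem (by grind),
        Finset.card_pair hst']
    have := Set.ncard_le_ncard hsub hT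
    rw [Set.ncard_coe_finset] at this
    omega
  constructor
  · ext x
    constructor
    · intro hx
      have hxT : x ∈ T := by
        rcases hx with hx | hx
        exacts [hB hx.1, hX hx.1]
      obtain ⟨s', hs', t', ht', hst', he', hx'⟩ :=
        (mem_symmDiff_iff_of_isMatching hM hc hX hxT).1 hx
      have h1 := huniq s' hs' t' ht' hst' he'
      have h2 : r x ∈ s(r s, r t) := by
        rw [← h1]
        rcases hx' with rfl | rfl <;> simp
      rcases Sym2.mem_iff.1 h2 with h' | h'
      · exact Or.inl (hinj hxT hs h')
      · exact Or.inr (hinj hxT ht h')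
    · intro hx
      have hxT : x ∈ T := by
        rcases hx with rfl | rfl
        exacts [hs, ht]
      exact (mem_symmDiff_iff_of_isMatching hM hc hX hxT).2 ⟨s, hs, t, ht, hst, he, hx⟩
  · intro e heM hne
    obtain ⟨u, v, huv, rfl⟩ := hM.1 e heM
    rcases huv with h | ⟨s', hs', t', ht', hst', -, h⟩
    · exact h
    · rw [h] at heM hne
      exact absurd (huniq s' hs' t' ht' hst' heM) hne

theorem exists_isMatching_pendantNetwork {X : Set V} (hcard : T.ncard ≤ 3) (hX : X ⊆ T)
    (hF : F (symmDiff B X)) (heven : Even (symmDiff B X).ncard) :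
    ∃ M, (pendantNetwork T B hT hB r hrB hr hinj F).IsMatching M ∧
      coversVerts M = r '' B ∪ X := by
  classical
  have hDT : symmDiff B X ⊆ T := by
    intro x hx
    rcases hx with hx | hx
    exacts [hB hx.1, hX hx.1]
  have hle := Set.ncard_le_ncard hDT hT
  have hDfin := hT.subset hDT
  set D := symmDiff B X with hD
  have hmemD : ∀ x, x ∈ D ↔ (x ∈ B ∧ x ∉ X) ∨ (x ∈ X ∧ x ∉ B) := fun x => Set.mem_symmDiff
  clear_value D
  have hcases : D = ∅ ∨ ∃ s t, s ≠ t ∧ D = {s, t} := by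
    have : D.ncard = 0 ∨ D.ncard = 2 := by
      obtain ⟨k, hk⟩ := heven
      omega
    rcases this with h | h
    · exact Or.inl ((Set.ncard_eq_zero hDfin).1 h)
    · exact Or.inr (Set.ncard_eq_two.1 h)
  have hrT : ∀ t ∈ T, ∀ b ∈ B, b ≠ r t := by grind
  have hpd : ∀ b ∈ B ∩ X, ∀ b' ∈ B ∩ X, s(b, r b) ≠ s(b', r b') →
      ∀ v, v ∈ s(b, r b) → v ∉ s(b', r b') := by
    intro b hb b' hb' hne v hv hv'
    have h1 := hrT b (hB hb.1) b' hb'.1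
    have h2 := hrT b' (hB hb'.1) b hb.1
    have h3 := @hinj b (hB hb.1) b' (hB hb'.1)
    grind
  rcases hcases with rfl | ⟨s, t, hst, rfl⟩
  · have hBX : B = X := by
      ext x
      have := hmemD x
      grind
    subst hBX
    refine ⟨(fun b => s(b, r b)) '' B, ⟨?_, ?_⟩, ?_⟩
    · rintro _ ⟨b, hb, rfl⟩
      exact ⟨b, r b, Or.inl ⟨b, hb, rfl⟩, rfl⟩
    · rintro _ ⟨b, hb, rfl⟩ _ ⟨b', hb', rfl⟩
      exact hpd b ⟨hb, hb⟩ b' ⟨hb', hb'⟩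
    · ext v
      simp only [coversVerts, Set.mem_ofPred_eq, Set.mem_union, Set.mem_image]
      grind
  · have hs := hDT (Set.mem_insert s {t})
    have ht := hDT (Set.mem_insert_of_mem s (Set.mem_singleton t))
    have hcd : ∀ b ∈ B ∩ X, ∀ v, v ∈ s(b, r b) → v ∉ s(r s, r t) := by
      intro b hb v hv hv'
      have h1 := hrT s hs b hb.1
      have h2 := hrT t ht b hb.1
      have h3 := @hinj b (hB hb.1) s hs
      have h4 := @hinj b (hB hb.1) t ht
      have h5 := hmemD b
      grind
    refine ⟨insert s(r s, r t) ((fun b => s(b, r b)) '' (B ∩ X)), ⟨?_, ?_⟩, ?_⟩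
    · rintro _ (rfl | ⟨b, hb, rfl⟩)
      · exact ⟨r s, r t, Or.inr ⟨s, hs, t, ht, hst, hF, rfl⟩, rfl⟩
      · exact ⟨b, r b, Or.inl ⟨b, hb.1, rfl⟩, rfl⟩
    · rintro _ (rfl | ⟨b, hb, rfl⟩) _ (rfl | ⟨b', hb', rfl⟩) hne v hv hv'
      · exact hne rfl
      · exact hcd b' hb' v hv' hv
      · exact hcd b hb v hv hv'
      · exact hpd b hb b' hb' hne v hv hv'
    · ext v
      have hDv := hmemD v
      have hDs := hmemD s
      have hDt := hmemD t
      simp only [Set.mem_insert_iff, Set.mem_singleton_iff] at hDv hDs hDt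
      simp only [coversVerts, Set.mem_ofPred_eq, Set.mem_insert_iff, exists_eq_or_imp,
        Sym2.mem_iff, Set.mem_union, Set.mem_image, Set.mem_inter_iff]
      constructor
      · grind
      · rintro (⟨b, hb, rfl⟩ | hv)
        · have := hmemD b
          grind
        · grind

end PendantNetwork

/-- Every function on the subsets of at most three terminals whose finite values all lie on sets
of the same parity is, up to an additive constant, the minimum matching weight of a network on at
most twice as many vertices. -/
theorem exists_network_of_even_symmDiff {V : Type} {T B : Set V} (hT : T.Finite)
    (hcard : T.ncard ≤ 3) (hB : B ⊆ T) {r : V → V} (hrB : ∀ t ∈ B, r t ∉ T)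
    (hr : ∀ t ∉ B, r t = t) (hinj : Set.InjOn r T) (f : Set V → WithTop ℤ) (hfB : f B ≠ ⊤)
    (hpar : ∀ X ⊆ T, f X ≠ ⊤ → Even (symmDiff B X).ncard) :
    ∃ (G' : FinGraph V) (w' : Sym2 V → ℤ) (c : ℤ),
      T ⊆ G'.verts ∧ G'.verts.ncard ≤ 2 * T.ncard ∧
      ∀ X ⊆ T, f X = (c : WithTop ℤ) + minMatchingWeight G' w' T X := by
  obtain ⟨c, hc⟩ := WithTop.ne_top_iff_exists.1 hfB
  let F : Set V → Prop := fun Y => f (symmDiff B Y) ≠ ⊤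
  let w' : Sym2 V → ℤ := fun e => (f (symmDiff B {x | x ∈ T ∧ r x ∈ e})).untopD c - c
  have hw_core : ∀ s ∈ T, ∀ t ∈ T,
      w' s(r s, r t) = (f (symmDiff B {s, t})).untopD c - c := by
    intro s hs t ht
    have : {x | x ∈ T ∧ r x ∈ s(r s, r t)} = {s, t} := by
      ext x
      simp only [Set.mem_ofPred_eq, Sym2.mem_iff, Set.mem_insert_iff, Set.mem_singleton_iff]
      constructor
      · rintro ⟨hx, h | h⟩
        exacts [Or.inl (hinj hx hs h), Or.inr (hinj hx ht h)]
      · rintro (rfl | rfl) <;> simp_all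
    simp only [w', this]
  have hw_pend : ∀ b ∈ B, w' s(b, r b) = 0 := by
    intro b hb
    have : {x | x ∈ T ∧ r x ∈ s(b, r b)} = {b} := by
      ext x
      simp only [Set.mem_ofPred_eq, Sym2.mem_iff, Set.mem_singleton_iff]
      constructor
      · rintro ⟨hx, h | h⟩
        · grind
        · exact hinj hx (hB hb) h
      · rintro rfl
        exact ⟨hB hb, Or.inr rfl⟩
    have htop : f (symmDiff B {b}) = ⊤ := by
      by_contra h
      have hsub : symmDiff B {b} ⊆ T := by
        intro x hx
        rw [Set.mem_symmDiff] at hx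
        grind
      have := hpar _ hsub h
      rw [symmDiff_symmDiff_cancel_left, Set.ncard_singleton] at this
      exact absurd this (by decide)
    simp only [w', this, htop, WithTop.untopD_top, sub_self]
  have hweight : ∀ X ⊆ T, ∀ M, (pendantNetwork T B hT hB r hrB hr hinj F).IsMatching M →
      coversVerts M = r '' B ∪ X → f X = ((c + ∑ᶠ e ∈ M, w' e : ℤ) : WithTop ℤ) := by
    intro X hX M hM hcov
    by_cases hcore : ∃ s ∈ T, ∃ t ∈ T, s ≠ t ∧ s(r s, r t) ∈ M
    · obtain ⟨s, hs, t, ht, hst, he⟩ := hcore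
      obtain ⟨hD, hrest⟩ := eq_symmDiff_pair_of_isMatching hcard hM hcov hX hs ht hst he
      have hX' : symmDiff B {s, t} = X := by rw [← hD, symmDiff_symmDiff_cancel_left]
      have hsum : ∑ᶠ e ∈ M, w' e = w' s(r s, r t) := by
        have hzero : ∀ e, e ≠ s(r s, r t) → ∑ᶠ _ : e ∈ M, w' e = 0 := by
          intro e hne
          by_cases heM : e ∈ M
          · obtain ⟨b, hb, rfl⟩ := hrest e heM hne
            simp [heM, hw_pend b hb]
          · simp [heM]
        rw [finsum_eq_single (fun e => ∑ᶠ _ : e ∈ M, w' e) _ hzero]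
        simp [he]
      have hfX : f X ≠ ⊤ := by
        obtain ⟨u, v, huv, huv'⟩ := hM.1 _ he
        rcases huv with ⟨b, hb, h⟩ | ⟨s', hs', t', ht', -, hF, h⟩
        · exfalso
          have h1 : b ∈ s(r s, r t) := by rw [huv', h]; simp
          have := hB hb
          grind
        · have h1 : ({s', t'} : Set V) = {s, t} := by
            rw [← huv'] at h
            rcases Sym2.eq_iff.1 h with ⟨h2, h3⟩ | ⟨h2, h3⟩
            · rw [hinj hs hs' h2, hinj ht ht' h3]
            · rw [hinj hs ht' h2, hinj ht hs' h3, Set.pair_comm]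
          have h2 : f (symmDiff B {s', t'}) ≠ ⊤ := hF
          rwa [h1, hX'] at h2
      rw [hsum, hw_core s hs t ht, hX']
      obtain ⟨a, ha⟩ := WithTop.ne_top_iff_exists.1 hfX
      rw [← ha]
      simp
    · have hBX : B = X := by
        rw [← symmDiff_eq_bot, Set.bot_eq_empty, Set.eq_empty_iff_forall_notMem]
        intro x hx
        have hxT : x ∈ T := by
          rcases hx with hx | hx
          exacts [hB hx.1, hX hx.1]
        obtain ⟨s, hs, t, ht, hst, he, -⟩ :=
          (mem_symmDiff_iff_of_isMatching hM hcov hX hxT).1 hx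
        exact hcore ⟨s, hs, t, ht, hst, he⟩
      have hsum : ∑ᶠ e ∈ M, w' e = 0 := by
        refine finsum_mem_eq_zero_of_forall_eq_zero fun e he => ?_
        obtain ⟨u, v, huv, rfl⟩ := hM.1 e he
        rcases huv with ⟨b, hb, h⟩ | ⟨s, hs, t, ht, hst, -, h⟩
        · rw [h]
          exact hw_pend b hb
        · exact absurd ⟨s, hs, t, ht, hst, h ▸ he⟩ hcore
      rw [hsum, add_zero, hc, hBX]
  refine ⟨pendantNetwork T B hT hB r hrB hr hinj F, w', c, Set.subset_union_left,
    pendantNetwork_ncard_verts_le, fun X hX => ?_⟩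
  by_cases hfX : f X = ⊤
  · rw [hfX, minMatchingWeight_eq_top, WithTop.add_top]
    intro M hM hcov
    rw [pendantNetwork_verts_diff] at hcov
    rw [hweight X hX M hM hcov] at hfX
    exact WithTop.coe_ne_top hfX
  · obtain ⟨a, ha⟩ := WithTop.ne_top_iff_exists.1 hfX
    rw [minMatchingWeight_eq_coe (a := a - c), ← WithTop.coe_add, add_sub_cancel, ha]
    · rw [pendantNetwork_verts_diff]
      refine exists_isMatching_pendantNetwork hcard hX ?_ (hpar X hX hfX)
      change f (symmDiff B (symmDiff B X)) ≠ ⊤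
      rwa [symmDiff_symmDiff_cancel_left]
    · intro M hM hcov
      rw [pendantNetwork_verts_diff] at hcov
      have := hweight X hX M hM hcov
      rw [← ha, WithTop.coe_inj] at this
      omega

/-- Weighted matching-mimicking networks for at most three terminals: there is an `N` such
that every integer-edge-weighted finite simple graph `G` with a terminal set `T` of at most
three vertices has a weighted mimicking network `G'` with at most `N` vertices — for some
constant `c ∈ ℤ`, for every `X ⊆ T`, the minimum weight of a matching of `G` covering
exactly `(V(G) \ T) ∪ X` equals `c` plus the corresponding minimum weight in `G'`
(in `ℤ ∪ {+∞}`, with `c + ∞ = ∞`). -/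
theorem weighted_matching_mimicking_network_exists :
    ∃ N : ℕ, ∀ (V : Type) (G : FinGraph V) (w : Sym2 V → ℤ) (T : Set V),
      T ⊆ G.verts → T.ncard ≤ 3 →
      ∃ (G' : FinGraph V) (w' : Sym2 V → ℤ) (c : ℤ),
        T ⊆ G'.verts ∧ G'.verts.ncard ≤ N ∧
        ∀ X ⊆ T, minMatchingWeight G w T X =
          (c : WithTop ℤ) + minMatchingWeight G' w' T X := by
  refine ⟨6, fun V G w T hTG hcard => ?_⟩
  have hT : T.Finite := G.finite.subset hTG
  have hTe : T.encard ≤ 3 := by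
    rw [← hT.cast_ncard_eq]
    exact_mod_cast hcard
  by_cases hfresh : 3 ≤ Tᶜ.encard
  · obtain ⟨p, hp⟩ : Tᶜ.Nonempty := by
      rw [← Set.encard_pos]
      exact lt_of_lt_of_le (by norm_num) hfresh
    by_cases hfin : ∃ B ⊆ T, minMatchingWeight G w T B ≠ ⊤
    · obtain ⟨B, hB, hfB⟩ := hfin
      have : Nonempty V := ⟨p⟩
      obtain ⟨g, hgT, hginj⟩ := (hT.subset hB).exists_injOn_of_encard_le
        (((Set.encard_le_encard hB).trans hTe).trans hfresh)
      classical
      have hgT' : ∀ t ∈ B, g t ∉ T := fun t ht => hgT ht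
      obtain ⟨G', w', c, h1, h2, h3⟩ := exists_network_of_even_symmDiff
        (r := fun t => if t ∈ B then g t else t) hT hcard hB (by grind) (by grind)
        (by
          intro x hx y hy hxy
          have := @hginj x
          grind)
        (minMatchingWeight G w T) hfB fun X hX hfX =>
          even_ncard_symmDiff_of_minMatchingWeight_ne_top hTG hB hX hfB hfX
      exact ⟨G', w', c, h1, by omega, h3⟩
    · push Not at hfin
      refine ⟨⟨insert p T, hT.insert p, fun _ _ => False, fun _ _ h => h, fun _ h => h,
        fun _ _ h => h.elim⟩, 0, 0, Set.subset_insert p T, ?_, fun X hX => ?_⟩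
      · have := Set.ncard_insert_le p T
        change (insert p T).ncard ≤ 6
        omega
      · rw [hfin X hX, minMatchingWeight_eq_top, WithTop.add_top]
        intro M hM hcov
        have hpM : p ∈ coversVerts M := by
          rw [hcov]
          exact Or.inl ⟨Set.mem_insert p T, hp⟩
        obtain ⟨e, he, -⟩ := hpM
        obtain ⟨u, v, huv, -⟩ := hM.1 e he
        exact huv
  · refine ⟨G, w, 0, hTG, ?_, fun X _ => by simp⟩
    have h1 : G.verts.encard ≤ 6 := by
      calc G.verts.encard ≤ (Set.univ : Set V).encard := Set.encard_le_encard (Set.subset_univ _)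
        _ = T.encard + Tᶜ.encard := (Set.encard_add_encard_compl T).symm
        _ ≤ 3 + 3 := add_le_add hTe (not_le.1 hfresh).le
        _ = 6 := by norm_num
    rw [← G.finite.cast_ncard_eq] at h1
    exact_mod_cast h1
end
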